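/- arXiv:2601.19848 — 3 statements merged into one kernel-verified Lean document; each statement's English description precedes it below -/
import Mathlib

section
/- Let G ⊆ P_n be a stabilizer group with parameters [[n,k,d;w]] where k ≥ 1 and d(G) ≥ 2, and let t := A₁(G) be the number of weight-1 elements of G. Then there exists a stabilizer group G' ⊆ P_{n−t} with parameters [[n−t, k, d; w]] and with A₁(G') = 0 (G' contains no weight-1 element). -/
open scoped Classical

noncomputable section

/-- Pauli strings modulo phase, indexed by a finite type. -/
abbrev PauliT (ι : Type) : Type := ι → ZMod 2 × ZMod 2

abbrev Pauli (n : ℕ) : Type := PauliT (Fin n)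

variable {ι : Type} [Fintype ι]

/-- Weight of a Pauli string. -/
def wt (v : PauliT ι) : ℕ := (Finset.univ.filter fun i => v i ≠ 0).card

/-- Support of a Pauli string. -/
def suppF (v : PauliT ι) : Finset ι := Finset.univ.filter fun i => v i ≠ 0

/-- Symplectic form encoding commutation. -/
def sympl (u v : PauliT ι) : ZMod 2 :=
  ∑ i, ((u i).1 * (v i).2 + (u i).2 * (v i).1)

/-- `G` is a stabilizer group (isotropic subspace). -/
def IsStabilizer (G : Submodule (ZMod 2) (PauliT ι)) : Prop :=
  ∀ u ∈ G, ∀ v ∈ G, sympl u v = 0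

/-- Membership in the symplectic dual `G^⊥`. -/
def inDual (G : Submodule (ZMod 2) (PauliT ι)) (v : PauliT ι) : Prop :=
  ∀ g ∈ G, sympl v g = 0

/-- Distance: minimum weight of an element of `G^⊥ \ G`, `⊤` if none exists. -/
def distG (G : Submodule (ZMod 2) (PauliT ι)) : ℕ∞ :=
  sInf ((fun v => (wt v : ℕ∞)) '' {v | inDual G v ∧ v ∉ G})

/-- `g` is an `𝔽₂`-basis (indexed family) of `G`. -/
def IsBasisFam {r : ℕ} (G : Submodule (ZMod 2) (PauliT ι)) (g : Fin r → PauliT ι) : Prop :=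
  LinearIndependent (ZMod 2) g ∧ Submodule.span (ZMod 2) (Set.range g) = G

/-- The weight of a stabilizer group: optimal maximum generator weight over bases. -/
def Wgt (G : Submodule (ZMod 2) (PauliT ι)) : ℕ∞ :=
  ⨅ (r : ℕ) (g : Fin r → PauliT ι) (_ : IsBasisFam G g),
    Finset.univ.sup fun i => (wt (g i) : ℕ∞)

/-- Optimal weight over all `[[n,k,d]]` stabilizer codes. -/
def Wopt (n k : ℕ) (d : ℕ∞) : ℕ∞ :=
  ⨅ (G : Submodule (ZMod 2) (Pauli n))
    (_ : IsStabilizer G ∧ Module.finrank (ZMod 2) ↥G = n - k ∧ distG G = d),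
    Wgt G

/-- Weight enumerator: number of elements of `G` of weight `j`. -/
def Aj (G : Submodule (ZMod 2) (PauliT ι)) (j : ℕ) : ℕ :=
  Nat.card {g : PauliT ι // g ∈ G ∧ wt g = j}

/-- A weight-optimal generating set. -/
def IsWeightOptimalBasis {r : ℕ} (G : Submodule (ZMod 2) (PauliT ι))
    (g : Fin r → PauliT ι) : Prop :=
  IsBasisFam G g ∧ Monotone (fun i => wt (g i)) ∧
    ∀ h : Fin r → PauliT ι, IsBasisFam G h → Monotone (fun i => wt (h i)) →
      ∀ i, wt (g i) ≤ wt (h i)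

/-- Set of average generator weights over all bases of `G`. -/
def WavgSet (G : Submodule (ZMod 2) (PauliT ι)) : Set ℚ :=
  {x | ∃ (r : ℕ) (g : Fin r → PauliT ι), IsBasisFam G g ∧
        x = (∑ i, (wt (g i) : ℚ)) / (r : ℚ)}

/-- Splitting of Pauli strings along a bipartition given by a predicate. -/
def splitEquiv (p : ι → Prop) :
    PauliT ι ≃ₗ[ZMod 2] PauliT {x // p x} × PauliT {x // ¬ p x} :=
  (LinearEquiv.funCongrLeft (ZMod 2) (ZMod 2 × ZMod 2) (Equiv.sumCompl p)).trans
    (LinearEquiv.sumArrowLequivProdArrow _ _ _ _)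

/-- Tensor product of subspaces along a bipartition. -/
def tensorAlong (p : ι → Prop)
    (GA : Submodule (ZMod 2) (PauliT {x // p x}))
    (GB : Submodule (ZMod 2) (PauliT {x // ¬ p x})) :
    Submodule (ZMod 2) (PauliT ι) :=
  (GA.prod GB).comap (splitEquiv p).toLinearMap

/-- Decomposability as a tensor product over a nontrivial bipartition. -/
def Decomposable (G : Submodule (ZMod 2) (PauliT ι)) : Prop :=
  ∃ p : ι → Prop, (∃ x, p x) ∧ (∃ x, ¬ p x) ∧
    ∃ (GA : Submodule (ZMod 2) (PauliT {x // p x}))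
      (GB : Submodule (ZMod 2) (PauliT {x // ¬ p x})),
      G = tensorAlong p GA GB

/-- Identification of `Pauli (n₁+n₂)` with `Pauli n₁ × Pauli n₂`. -/
def pauliSumEquiv (n₁ n₂ : ℕ) :
    Pauli (n₁ + n₂) ≃ₗ[ZMod 2] Pauli n₁ × Pauli n₂ :=
  (LinearEquiv.funCongrLeft (ZMod 2) (ZMod 2 × ZMod 2) finSumFinEquiv).trans
    (LinearEquiv.sumArrowLequivProdArrow _ _ _ _)

/-- Tensor product of stabilizer subspaces on `n₁` and `n₂` qubits. -/
def tensorFin {n₁ n₂ : ℕ} (G₁ : Submodule (ZMod 2) (Pauli n₁))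
    (G₂ : Submodule (ZMod 2) (Pauli n₂)) :
    Submodule (ZMod 2) (Pauli (n₁ + n₂)) :=
  (G₁.prod G₂).comap (pauliSumEquiv n₁ n₂).toLinearMap

/-!
A weight-one element `g` of `G`, acting on the qubit `i`, forces every `u ∈ G^⊥` to satisfy
`u i = 0` or `u i = g i`. Hence distinct weight-one elements of `G` act on distinct qubits, and `u`
differs from its restriction to the remaining qubits by a product of weight-one elements. So `G` is
the direct sum of the span of its weight-one elements and a stabilizer group `G'` on the remaining
`n - t` qubits, and restriction and extension by zero between `G^⊥` and `G'^⊥` do not increase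
weights, so that the distances agree. Generators of `G'` together with the weight-one elements
generate `G`, so the weights can differ only when `G' = 0` and `t > 0`; but then, if `k ≥ 1`, any
single-qubit Pauli on a remaining qubit is a logical operator, which contradicts `d ≥ 2`.
-/

theorem linearIndepOn_id_of_pairwiseDisjoint_support {R M α : Type*} [Ring R] [IsDomain R]
    [AddCommGroup M] [Module R M] [Module.IsTorsionFree R M] {S : Set (α → M)}
    (hdisj : S.PairwiseDisjoint Function.support) (hzero : 0 ∉ S) : LinearIndepOn R id S := by
  rw [linearIndepOn_iff']
  intro t c htS hsum g hg
  have hg_ne : g ≠ 0 := fun h => hzero (h ▸ htS hg)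
  obtain ⟨i, hi⟩ := Function.ne_iff.mp hg_ne
  have hothers : ∀ h ∈ t, h ≠ g → (c h • id h) i = 0 := by
    intro h hh hne
    have hi_notMem : i ∉ Function.support h :=
      fun hhi => Set.disjoint_left.mp (hdisj (htS hh) (htS hg) hne) hhi hi
    rw [Pi.smul_apply, id, Function.notMem_support.mp hi_notMem, smul_zero]
  have hcg : c g • g i = 0 := by
    have := congrFun hsum i
    rwa [Finset.sum_apply, Finset.sum_eq_single_of_mem g hg hothers] at this
  exact (smul_eq_zero.mp hcg).resolve_right hi

theorem exists_embedding_range_eq_compl {κ : Type} [Fintype κ] (s : Finset ι)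
    (hκ : Fintype.card κ = Fintype.card ι - s.card) :
    ∃ f : κ ↪ ι, Set.range f = (↑s : Set ι)ᶜ := by
  have hcard : Fintype.card κ = Fintype.card {i // i ∉ s} := by
    rw [hκ, Fintype.card_subtype_compl, Fintype.card_coe]
  let e : κ ≃ {i // i ∉ s} := Fintype.equivOfCardEq hcard
  exact ⟨e.toEmbedding.trans (Function.Embedding.subtype _),
    (e.surjective.range_comp _).trans Subtype.range_coe⟩

section PauliStrings

theorem mem_suppF {v : PauliT ι} {i : ι} : i ∈ suppF v ↔ v i ≠ 0 := by
  simp [suppF]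

theorem coe_suppF (v : PauliT ι) : (suppF v : Set ι) = Function.support v := by
  ext i
  simp [mem_suppF]

theorem wt_eq_zero {v : PauliT ι} : wt v = 0 ↔ v = 0 := by
  simp [wt, Finset.filter_eq_empty_iff, funext_iff]

theorem wt_single {i : ι} {x : ZMod 2 × ZMod 2} (hx : x ≠ 0) :
    wt (Pi.single i x : PauliT ι) = 1 := by
  refine Finset.card_eq_one.mpr ⟨i, ?_⟩
  ext j
  rcases eq_or_ne j i with rfl | hj <;> simp [*]

theorem eq_single_of_wt_eq_one {g : PauliT ι} {i : ι} (hg : wt g = 1) (hi : g i ≠ 0) :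
    g = Pi.single i (g i) := by
  obtain ⟨k, hk⟩ : ∃ k, suppF g = {k} := Finset.card_eq_one.mp hg
  have hsupp (j : ι) : g j ≠ 0 ↔ j = k := by rw [← mem_suppF, hk, Finset.mem_singleton]
  obtain rfl : i = k := (hsupp i).mp hi
  ext1 j
  rcases eq_or_ne j i with rfl | hj
  · rw [Pi.single_eq_same]
  · rw [Pi.single_eq_of_ne hj]
    exact not_not.mp (mt (hsupp j).mp hj)

theorem sympl_comm (u v : PauliT ι) : sympl u v = sympl v u :=
  Finset.sum_congr rfl fun _ _ => by ring

theorem sympl_single (u : PauliT ι) (i : ι) (x : ZMod 2 × ZMod 2) :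
    sympl u (Pi.single i x) = (u i).1 * x.2 + (u i).2 * x.1 := by
  unfold sympl
  rw [Fintype.sum_eq_single i fun j hj => by simp [Pi.single_eq_of_ne hj], Pi.single_eq_same]

theorem eq_zero_or_eq_of_commute {x y : ZMod 2 × ZMod 2} (hy : y ≠ 0)
    (h : x.1 * y.2 + x.2 * y.1 = 0) : x = 0 ∨ x = y := by
  revert x y
  decide

end PauliStrings

section Weight

variable {G : Submodule (ZMod 2) (PauliT ι)}

-- Generating sets suffice in place of bases, because every spanning set contains a basis.
theorem Wgt_le_iff {w : ℕ∞} :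
    Wgt G ≤ w ↔ G ≤ Submodule.span (ZMod 2) {g | g ∈ G ∧ (wt g : ℕ∞) ≤ w} := by
  constructor
  · intro h
    rcases eq_or_ne w ⊤ with rfl | hw
    · exact fun g hg => Submodule.subset_span ⟨hg, le_top⟩
    obtain ⟨r, b, hb, hbw⟩ : ∃ (r : ℕ) (b : Fin r → PauliT ι) (_ : IsBasisFam G b),
        Finset.univ.sup (fun i => (wt (b i) : ℕ∞)) < w + 1 := by
      simpa only [Wgt, iInf_lt_iff] using h.trans_lt ((ENat.lt_add_one_iff hw).mpr le_rfl)
    rw [ENat.lt_add_one_iff hw, Finset.sup_le_iff] at hbw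
    have hb_mem (i : Fin r) : b i ∈ G := hb.2.le (Submodule.subset_span (Set.mem_range_self i))
    refine hb.2.ge.trans (Submodule.span_mono (Set.range_subset_iff.mpr fun i => ?_))
    exact ⟨hb_mem i, hbw i (Finset.mem_univ i)⟩
  · intro h
    obtain ⟨b, hb_mem, hb_span, hb_indep⟩ :=
      Submodule.exists_fun_fin_finrank_span_eq (ZMod 2) {g | g ∈ G ∧ (wt g : ℕ∞) ≤ w}
    have hb : IsBasisFam G b :=
      ⟨hb_indep, hb_span.trans (le_antisymm (Submodule.span_le.mpr fun g hg => hg.1) h)⟩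
    exact iInf₂_le_of_le _ b (iInf_le_of_le hb (Finset.sup_le fun i _ => (hb_mem i).2))

theorem one_le_Wgt (hG : G ≠ ⊥) : 1 ≤ Wgt G := by
  by_contra! hlt
  refine hG (le_bot_iff.mp ((Wgt_le_iff.mp (Order.lt_one_iff.mp hlt).le).trans ?_))
  rw [Submodule.span_le]
  rintro g ⟨-, hg⟩
  exact wt_eq_zero.mp (by simpa using hg)

end Weight

section WeightOneElements

/-- The elements of `G` of weight one, counted by `Aj G 1`. -/
def weightOneElements (G : Submodule (ZMod 2) (PauliT ι)) : Set (PauliT ι) :=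
  {g | g ∈ G ∧ wt g = 1}

/-- The qubits on which some weight-one element of `G` acts; in the code defined by `G` their state
is fixed, and they carry no logical information. -/
def pinnedQubits (G : Submodule (ZMod 2) (PauliT ι)) : Finset ι :=
  (weightOneElements G).toFinset.biUnion suppF

variable {G : Submodule (ZMod 2) (PauliT ι)}

theorem mem_pinnedQubits {i : ι} : i ∈ pinnedQubits G ↔ ∃ g ∈ weightOneElements G, g i ≠ 0 := by
  simp [pinnedQubits, mem_suppF]

theorem inDual.apply_eq_zero_or_eq {u g : PauliT ι} {i : ι} (hu : inDual G u)
    (hg : g ∈ weightOneElements G) (hi : g i ≠ 0) : u i = 0 ∨ u i = g i := by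
  refine eq_zero_or_eq_of_commute hi ?_
  rw [← sympl_single, ← eq_single_of_wt_eq_one hg.2 hi]
  exact hu g hg.1

theorem inDual.single_mem_span_weightOneElements {u : PauliT ι} {i : ι} (hu : inDual G u)
    (hi : i ∈ pinnedQubits G) :
    Pi.single i (u i) ∈ Submodule.span (ZMod 2) (weightOneElements G) := by
  obtain ⟨g, hg, hgi⟩ := mem_pinnedQubits.mp hi
  rcases hu.apply_eq_zero_or_eq hg hgi with h | h
  · rw [h, Pi.single_zero]
    exact zero_mem _
  · rw [h, ← eq_single_of_wt_eq_one hg.2 hgi]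
    exact Submodule.subset_span hg

theorem span_weightOneElements_le : Submodule.span (ZMod 2) (weightOneElements G) ≤ G :=
  Submodule.span_le.mpr fun _ hg => hg.1

theorem apply_eq_zero_of_mem_span_weightOneElements {v : PauliT ι} {i : ι}
    (hv : v ∈ Submodule.span (ZMod 2) (weightOneElements G)) (hi : i ∉ pinnedQubits G) :
    v i = 0 := by
  have hle : Submodule.span (ZMod 2) (weightOneElements G) ≤
      LinearMap.ker (LinearMap.proj (R := ZMod 2) (φ := fun _ : ι => ZMod 2 × ZMod 2) i) :=
    Submodule.span_le.mpr fun g hg => by_contra fun hgi => hi (mem_pinnedQubits.mpr ⟨g, hg, hgi⟩)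
  exact hle hv

theorem IsStabilizer.pairwiseDisjoint_suppF (hG : IsStabilizer G) :
    (weightOneElements G).PairwiseDisjoint suppF := by
  intro g hg h hh hne
  refine Finset.disjoint_left.mpr fun i hgi hhi => hne ?_
  rw [mem_suppF] at hgi hhi
  have heq : g i = h i :=
    (inDual.apply_eq_zero_or_eq (hG g hg.1) hh hhi).resolve_left hgi
  rw [eq_single_of_wt_eq_one hg.2 hgi, heq, ← eq_single_of_wt_eq_one hh.2 hhi]

theorem card_toFinset_weightOneElements : (weightOneElements G).toFinset.card = Aj G 1 := by
  rw [Set.toFinset_card, ← Nat.card_eq_fintype_card]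
  rfl

theorem IsStabilizer.card_pinnedQubits (hG : IsStabilizer G) :
    (pinnedQubits G).card = Aj G 1 := by
  have hdisj : ((weightOneElements G).toFinset : Set (PauliT ι)).PairwiseDisjoint suppF := by
    rw [Set.coe_toFinset]
    exact hG.pairwiseDisjoint_suppF
  calc (pinnedQubits G).card
      = ∑ g ∈ (weightOneElements G).toFinset, wt g := Finset.card_biUnion hdisj
    _ = ∑ g ∈ (weightOneElements G).toFinset, 1 :=
        Finset.sum_congr rfl fun g hg => (Set.mem_toFinset.mp hg).2
    _ = Aj G 1 := by rw [← Finset.card_eq_sum_ones, card_toFinset_weightOneElements]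

theorem IsStabilizer.finrank_span_weightOneElements (hG : IsStabilizer G) :
    Module.finrank (ZMod 2) (Submodule.span (ZMod 2) (weightOneElements G)) = Aj G 1 := by
  have hdisj : (weightOneElements G).PairwiseDisjoint Function.support := by
    intro g hg h hh hne
    simpa only [Function.onFun, ← coe_suppF, Finset.disjoint_coe] using
      hG.pairwiseDisjoint_suppF hg hh hne
  have hzero : 0 ∉ weightOneElements G := fun h => by
    simpa only [wt_eq_zero.mpr rfl, zero_ne_one] using h.2
  rw [finrank_span_set_eq_card (linearIndepOn_id_of_pairwiseDisjoint_support hdisj hzero),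
    card_toFinset_weightOneElements]

end WeightOneElements

section Distance

variable {G : Submodule (ZMod 2) (PauliT ι)}

theorem distG_le {v : PauliT ι} (hv : inDual G v) (hv_notMem : v ∉ G) : distG G ≤ wt v :=
  sInf_le ⟨v, ⟨hv, hv_notMem⟩, rfl⟩

-- An `X` on an unpinned qubit `j` commutes with all weight-one elements but is not in their span.
theorem distG_le_one_of_span_weightOneElements_eq {j : ι}
    (hspan : Submodule.span (ZMod 2) (weightOneElements G) = G) (hj : j ∉ pinnedQubits G) :
    distG G ≤ 1 := by
  have hG_apply : ∀ g ∈ G, g j = 0 := fun g hg =>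
    apply_eq_zero_of_mem_span_weightOneElements (hspan.symm ▸ hg) hj
  have hX : ((1, 0) : ZMod 2 × ZMod 2) ≠ 0 := by decide
  have hX_dual : inDual G (Pi.single j (1, 0)) := fun g hg => by
    simp [sympl_comm _ g, sympl_single, hG_apply g hg]
  have hX_notMem : Pi.single j (1, 0) ∉ G := fun hmem => hX (by simpa using hG_apply _ hmem)
  simpa only [wt_single hX, Nat.cast_one] using distG_le hX_dual hX_notMem

theorem IsStabilizer.Aj_one_lt_finrank (hG : IsStabilizer G)
    (hrank : Module.finrank (ZMod 2) G < Fintype.card ι) (hd : 2 ≤ distG G) :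
    Aj G 1 < Module.finrank (ZMod 2) G := by
  rw [← hG.finrank_span_weightOneElements]
  refine lt_of_le_of_ne (Submodule.finrank_mono span_weightOneElements_le) fun heq => ?_
  have hspan := Submodule.eq_of_le_of_finrank_eq span_weightOneElements_le heq
  have hcard : (pinnedQubits G).card < (Finset.univ : Finset ι).card := by
    rwa [hG.card_pinnedQubits, ← hG.finrank_span_weightOneElements, heq, Finset.card_univ]
  obtain ⟨j, -, hj⟩ := Finset.exists_mem_notMem_of_card_lt_card hcard
  exact absurd (hd.trans (distG_le_one_of_span_weightOneElements_eq hspan hj)) (by decide)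

theorem IsStabilizer.eq_bot_or_Aj_one_lt_finrank {k : ℕ} (hG : IsStabilizer G) (hk : 1 ≤ k)
    (hrank : Module.finrank (ZMod 2) G = Fintype.card ι - k) (hd : 2 ≤ distG G) :
    G = ⊥ ∨ Aj G 1 < Module.finrank (ZMod 2) G := by
  rcases isEmpty_or_nonempty ι with hι | hι
  · exact Or.inl (Subsingleton.elim _ _)
  · have hcard : 0 < Fintype.card ι := Fintype.card_pos
    exact Or.inr (hG.Aj_one_lt_finrank (by omega) hd)

end Distance

section ExtendByZero

variable {α β : Type} (f : α ↪ β)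

/-- Extension of Pauli strings along an embedding of qubits, by the identity on the other qubits.
The restriction in the other direction is precomposition with `f`. -/
def extendByZero : PauliT α →ₗ[ZMod 2] PauliT β where
  toFun v := Function.extend f v 0
  map_add' u v := by simpa only [add_zero] using Function.extend_add f u v 0 0
  map_smul' c v := by simpa only [smul_zero, RingHom.id_apply] using Function.extend_smul c f v 0

variable {f}

@[simp]
theorem extendByZero_apply (v : PauliT α) (a : α) : extendByZero f v (f a) = v a :=
  f.injective.extend_apply v 0 a

theorem extendByZero_apply_of_notMem (v : PauliT α) {b : β} (hb : b ∉ Set.range f) :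
    extendByZero f v b = 0 :=
  Function.extend_apply' v (0 : PauliT β) b hb

@[simp]
theorem extendByZero_comp (v : PauliT α) : extendByZero f v ∘ f = v :=
  funext (extendByZero_apply v)

theorem extendByZero_injective : Function.Injective (extendByZero f) :=
  Function.LeftInverse.injective (g := fun u : PauliT β => u ∘ f) extendByZero_comp

variable [Fintype α] [Fintype β]

theorem suppF_extendByZero (v : PauliT α) : suppF (extendByZero f v) = (suppF v).map f := by
  ext b
  by_cases hb : b ∈ Set.range f
  · obtain ⟨a, rfl⟩ := hb
    simp [mem_suppF]
  · have hb_notMem : b ∉ (suppF v).map f :=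
      fun h => hb (Finset.mem_map.mp h |>.imp fun _ => And.right)
    simp [mem_suppF, extendByZero_apply_of_notMem v hb, hb_notMem]

theorem wt_extendByZero (v : PauliT α) : wt (extendByZero f v) = wt v :=
  (congrArg Finset.card (suppF_extendByZero v)).trans (Finset.card_map f)

theorem wt_comp_le (u : PauliT β) : wt (u ∘ f) ≤ wt u := by
  refine Finset.card_le_card_of_injOn f (fun a ha => ?_) f.injective.injOn
  simpa using ha

theorem sympl_extendByZero (v : PauliT α) (u : PauliT β) :
    sympl (extendByZero f v) u = sympl v (u ∘ f) := by
  refine (Fintype.sum_of_injective f f.injective _ _ (fun b hb => ?_) fun a => ?_).symm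
  · simp [extendByZero_apply_of_notMem v hb]
  · simp

end ExtendByZero

section Shortening

variable {α β : Type} (f : α ↪ β) (G : Submodule (ZMod 2) (PauliT β))

/-- The subgroup of the elements of `G` supported on the range of `f`, as Pauli strings on the
qubits `α` (shortening, in the language of classical codes). -/
def shorten : Submodule (ZMod 2) (PauliT α) :=
  G.comap (extendByZero f)

variable {f G}

theorem mem_shorten {v : PauliT α} : v ∈ shorten f G ↔ extendByZero f v ∈ G :=
  Iff.rfl

variable [Fintype α] [Fintype β]

theorem inDual.inDual_shorten_comp {u : PauliT β} (hu : inDual G u) :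
    inDual (shorten f G) (u ∘ f) := by
  intro v hv
  rw [sympl_comm, ← sympl_extendByZero, sympl_comm]
  exact hu _ hv

theorem IsStabilizer.isStabilizer_shorten (hG : IsStabilizer G) : IsStabilizer (shorten f G) := by
  intro u hu
  have hdual : inDual (shorten f G) (extendByZero f u ∘ f) :=
    inDual.inDual_shorten_comp (hG _ hu)
  rwa [extendByZero_comp] at hdual

theorem Aj_shorten_one (hf : Disjoint (Set.range f) (pinnedQubits G)) :
    Aj (shorten f G) 1 = 0 := by
  refine Nat.card_eq_zero.mpr (Or.inl ⟨fun ⟨v, hv, hwt⟩ => ?_⟩)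
  have hv_ne : v ≠ 0 := fun h => by simp [wt_eq_zero.mpr h] at hwt
  obtain ⟨a, ha⟩ := Function.ne_iff.mp hv_ne
  refine Set.disjoint_left.mp hf (Set.mem_range_self a) (mem_pinnedQubits.mpr ⟨_, ⟨hv, ?_⟩, ?_⟩)
  · rw [wt_extendByZero, hwt]
  · rwa [extendByZero_apply]

end Shortening

section ShorteningToUnpinnedQubits

variable {κ : Type} {f : κ ↪ ι} {G : Submodule (ZMod 2) (PauliT ι)}

theorem inDual.sub_extendByZero_comp_mem_span (hf : (Set.range f)ᶜ ⊆ pinnedQubits G)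
    {u : PauliT ι} (hu : inDual G u) :
    u - extendByZero f (u ∘ f) ∈ Submodule.span (ZMod 2) (weightOneElements G) := by
  rw [← Finset.univ_sum_single (u - extendByZero f (u ∘ f))]
  refine Submodule.sum_mem _ fun i _ => ?_
  by_cases hi : i ∈ Set.range f
  · obtain ⟨a, rfl⟩ := hi
    simp
  · simpa [extendByZero_apply_of_notMem _ hi] using hu.single_mem_span_weightOneElements (hf hi)

theorem inDual.comp_mem_shorten_iff (hf : (Set.range f)ᶜ ⊆ pinnedQubits G) {u : PauliT ι}
    (hu : inDual G u) : u ∘ f ∈ shorten f G ↔ u ∈ G := by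
  have hsub := span_weightOneElements_le (hu.sub_extendByZero_comp_mem_span hf)
  rw [mem_shorten, ← Submodule.add_mem_iff_right G hsub, sub_add_cancel]

theorem IsStabilizer.span_weightOneElements_sup_map_shorten
    (hf : (Set.range f)ᶜ ⊆ pinnedQubits G) (hG : IsStabilizer G) :
    Submodule.span (ZMod 2) (weightOneElements G) ⊔ (shorten f G).map (extendByZero f) = G := by
  refine le_antisymm (sup_le span_weightOneElements_le (Submodule.map_comap_le _ _)) ?_
  intro g hg
  have hg_dual : inDual G g := hG g hg
  rw [← sub_add_cancel g (extendByZero f (g ∘ f))]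
  exact Submodule.add_mem_sup (hg_dual.sub_extendByZero_comp_mem_span hf)
    (Submodule.mem_map_of_mem ((hg_dual.comp_mem_shorten_iff hf).mpr hg))

theorem disjoint_span_weightOneElements_map_shorten
    (hf : Disjoint (Set.range f) (pinnedQubits G)) :
    Disjoint (Submodule.span (ZMod 2) (weightOneElements G))
      ((shorten f G).map (extendByZero f)) := by
  rw [Submodule.disjoint_def]
  rintro _ hv ⟨v, -, rfl⟩
  have hv_zero : v = 0 := funext fun a => by
    rw [← extendByZero_apply v a]
    exact apply_eq_zero_of_mem_span_weightOneElements hv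
      (Set.disjoint_left.mp hf (Set.mem_range_self a))
  rw [hv_zero, map_zero]

theorem IsStabilizer.finrank_shorten (hf : Set.range f = (↑(pinnedQubits G))ᶜ)
    (hG : IsStabilizer G) :
    Module.finrank (ZMod 2) (shorten f G) = Module.finrank (ZMod 2) G - Aj G 1 := by
  have hsup := hG.span_weightOneElements_sup_map_shorten (compl_le_of_compl_le hf.ge)
  have hdisj := disjoint_span_weightOneElements_map_shorten (le_compl_iff_disjoint_right.mp hf.le)
  have hmap : Module.finrank (ZMod 2) (shorten f G) =
      Module.finrank (ZMod 2) ((shorten f G).map (extendByZero f)) :=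
    (Submodule.equivMapOfInjective _ extendByZero_injective _).finrank_eq
  have hrank := Submodule.finrank_sup_add_finrank_inf_eq
    (Submodule.span (ZMod 2) (weightOneElements G)) ((shorten f G).map (extendByZero f))
  rw [hsup, hdisj.eq_bot, finrank_bot, hG.finrank_span_weightOneElements, ← hmap] at hrank
  omega

variable [Fintype κ]

theorem IsStabilizer.inDual_shorten_iff (hf : (Set.range f)ᶜ ⊆ pinnedQubits G)
    (hG : IsStabilizer G) {v : PauliT κ} :
    inDual (shorten f G) v ↔ inDual G (extendByZero f v) := by
  refine ⟨fun hv g hg => ?_, fun hv => ?_⟩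
  · rw [sympl_extendByZero]
    exact hv _ ((inDual.comp_mem_shorten_iff hf (hG g hg)).mpr hg)
  · simpa only [extendByZero_comp] using inDual.inDual_shorten_comp (f := f) hv

theorem IsStabilizer.distG_shorten (hf : (Set.range f)ᶜ ⊆ pinnedQubits G) (hG : IsStabilizer G) :
    distG (shorten f G) = distG G := by
  refine le_antisymm (le_sInf ?_) (le_sInf ?_)
  · rintro _ ⟨u, ⟨hu, hu_notMem⟩, rfl⟩
    calc distG (shorten f G)
        ≤ wt (u ∘ f) :=
          distG_le hu.inDual_shorten_comp (mt (hu.comp_mem_shorten_iff hf).mp hu_notMem)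
      _ ≤ wt u := Nat.cast_le.mpr (wt_comp_le u)
  · rintro _ ⟨v, ⟨hv, hv_notMem⟩, rfl⟩
    calc distG G
        ≤ wt (extendByZero f v) := distG_le ((hG.inDual_shorten_iff hf).mp hv) hv_notMem
      _ = wt v := congrArg Nat.cast (wt_extendByZero v)

theorem IsStabilizer.Wgt_shorten_le (hf : (Set.range f)ᶜ ⊆ pinnedQubits G)
    (hG : IsStabilizer G) : Wgt (shorten f G) ≤ Wgt G := by
  rw [Wgt_le_iff]
  intro v hv
  have hmap := Submodule.mem_map_of_mem (f := LinearMap.funLeft (ZMod 2) (ZMod 2 × ZMod 2) f)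
    (Wgt_le_iff.mp le_rfl hv)
  rw [Submodule.map_span] at hmap
  rw [← extendByZero_comp (f := f) v]
  refine Submodule.span_mono ?_ hmap
  rintro _ ⟨g, ⟨hg, hwt⟩, rfl⟩
  exact ⟨(inDual.comp_mem_shorten_iff hf (hG g hg)).mpr hg,
    (Nat.cast_le.mpr (wt_comp_le g)).trans hwt⟩

theorem IsStabilizer.Wgt_le_max_shorten (hf : (Set.range f)ᶜ ⊆ pinnedQubits G)
    (hG : IsStabilizer G) : Wgt G ≤ max (Wgt (shorten f G)) 1 := by
  rw [Wgt_le_iff]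
  conv_lhs => rw [← hG.span_weightOneElements_sup_map_shorten hf]
  refine sup_le (Submodule.span_mono ?_) ?_
  · rintro g ⟨hg, hwt⟩
    exact ⟨hg, by simp [hwt]⟩
  · refine (Submodule.map_mono (Wgt_le_iff.mp le_rfl)).trans ?_
    rw [Submodule.map_span]
    refine Submodule.span_mono ?_
    rintro _ ⟨v, ⟨hv, hwt⟩, rfl⟩
    exact ⟨hv, by rw [wt_extendByZero]; exact le_max_of_le_left hwt⟩

theorem IsStabilizer.Wgt_shorten (hf : (Set.range f)ᶜ ⊆ pinnedQubits G) (hG : IsStabilizer G)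
    (hne : shorten f G ≠ ⊥) : Wgt (shorten f G) = Wgt G := by
  refine le_antisymm (hG.Wgt_shorten_le hf) ?_
  simpa only [max_eq_left (one_le_Wgt hne)] using hG.Wgt_le_max_shorten hf

end ShorteningToUnpinnedQubits

theorem remove_weight_one_elements_general {κ : Type} [Fintype κ]
    (G : Submodule (ZMod 2) (PauliT ι)) (hG : IsStabilizer G)
    (hlt : G = ⊥ ∨ Aj G 1 < Module.finrank (ZMod 2) G)
    (hκ : Fintype.card κ = Fintype.card ι - Aj G 1) :
    ∃ G' : Submodule (ZMod 2) (PauliT κ),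
      IsStabilizer G' ∧
      Module.finrank (ZMod 2) G' = Module.finrank (ZMod 2) G - Aj G 1 ∧
      distG G' = distG G ∧ Wgt G' = Wgt G ∧ Aj G' 1 = 0 := by
  rw [← hG.card_pinnedQubits] at hκ
  obtain ⟨f, hf⟩ := exists_embedding_range_eq_compl (pinnedQubits G) hκ
  have hf_compl : (Set.range f)ᶜ ⊆ pinnedQubits G := compl_le_of_compl_le hf.ge
  have hrank := hG.finrank_shorten hf
  refine ⟨shorten f G, hG.isStabilizer_shorten, hrank, hG.distG_shorten hf_compl, ?_,
    Aj_shorten_one (le_compl_iff_disjoint_right.mp hf.le)⟩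
  rcases hlt with rfl | hlt
  · exact le_antisymm (hG.Wgt_shorten_le hf_compl) (Wgt_le_iff.mpr bot_le)
  · refine hG.Wgt_shorten hf_compl fun hbot => ?_
    rw [hbot, finrank_bot] at hrank
    omega

/-- removing the `t = A₁(G)` weight-one checks of an `[[n,k,d;w]]` code
(`k ≥ 1`, `d ≥ 2`) yields an `[[n-t,k,d;w]]` code with no weight-one stabilizer. -/
theorem remove_weight_one_elements (n k : ℕ) (d w : ℕ∞) (hk : 1 ≤ k) (hd : 2 ≤ d)
    (G : Submodule (ZMod 2) (Pauli n)) (hG : IsStabilizer G)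
    (hdim : Module.finrank (ZMod 2) ↥G = n - k) (hdist : distG G = d)
    (hW : Wgt G = w) :
    ∃ G' : Submodule (ZMod 2) (Pauli (n - Aj G 1)),
      IsStabilizer G' ∧
      Module.finrank (ZMod 2) ↥G' = (n - Aj G 1) - k ∧
      distG G' = d ∧ Wgt G' = w ∧ Aj G' 1 = 0 := by
  subst hdist hW
  have hlt := hG.eq_bot_or_Aj_one_lt_finrank hk (by rwa [Fintype.card_fin]) hd
  simpa only [hdim, Nat.sub_right_comm] using
    remove_weight_one_elements_general G hG hlt (by simp only [Fintype.card_fin])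

end
end

section
/- Let G ⊆ P_n be a stabilizer group of dimension n − k with a weight-optimal generating set g_1, …, g_{n−k} (ordered with wt(g_1) ≤ … ≤ wt(g_{n−k})). Let w := wt(g_{n−k}) = W(G) and let y := #{i : wt(g_i) = w}, so 1 ≤ y ≤ n − k. Then: (a) A_w(G) ≥ y; (b) Σ_{i=0}^{w−1} A_i(G) ≤ 2^{n−k−y}; and (c) for every M with w − 1 ≤ M ≤ n, Σ_{m=0}^{M} A_m(G) ≥ Σ_{p=0}^{n−k−y} Σ_{q=0}^{y} [p(w−1) + qw ≤ M] · C(n−k−y, p) · C(y, q), where C(·,·) denotes binomial coefficients and [·] is the indicator. -/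
open scoped Classical

noncomputable section

variable {ι : Type} [Fintype ι]

/-!
Extend a basis of the span of the elements of `G` of weight `< w` to a basis of `G` and sort it by
weight. All vectors of the small basis have weight `< w`, so minimality of `g` forces at least as
many of the `g i` to have weight `< w`; hence these light elements span a space of dimension at
most `#{i | wt (g i) < w}`, and over `𝔽₂` there are at most `2 ^ #{i | wt (g i) < w}` of them.

For the lower bound, the sums of `p` generators of weight `≤ w - 1` and `q` generators of weight
`w` are pairwise distinct by linear independence and have weight at most `p * (w - 1) + q * w` by
subadditivity.
-/

open Finset

section LinearAlgebra

variable {K V : Type*}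

theorem sum_injective_of_linearIndependent [Semiring K] [Nontrivial K] [AddCommMonoid V]
    [Module K V] {κ : Type*} {v : κ → V} (hv : LinearIndependent K v) :
    Function.Injective fun s : Finset κ => ∑ i ∈ s, v i := by
  intro s t hst
  have hcoeff := linearIndependent_iff'ₛ.1 hv (s ∪ t)
    (fun i => if i ∈ s then 1 else 0) (fun i => if i ∈ t then 1 else 0)
    (by simpa [ite_smul, union_inter_cancel_left, union_inter_cancel_right] using hst)
  ext i
  have := hcoeff i
  by_cases i ∈ s <;> by_cases i ∈ t <;> simp_all

variable [AddCommGroup V]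

theorem card_le_card_pow_finrank_span [DivisionRing K] [Finite K] [Module K V] (s : Finset V) :
    #s ≤ Nat.card K ^ Module.finrank K (Submodule.span K (s : Set V)) := by
  have : Finite (Submodule.span K (s : Set V)) := Module.finite_of_finite K
  rw [← Module.natCard_eq_pow_finrank, ← Set.ncard_coe_finset]
  exact Set.ncard_le_ncard Submodule.subset_span (Set.toFinite _)

theorem exists_monotone_linearIndependent_extension [DivisionRing K] [Module K V]
    {α : Type*} [LinearOrder α] (f : V → α) {G : Submodule K V} [Module.Finite K G] {s : Set V}
    (hs : LinearIndepOn K id s) (hsG : s ⊆ G) :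
    ∃ h : Fin (Module.finrank K G) → V, LinearIndependent K h ∧
      Submodule.span K (Set.range h) = G ∧ Monotone (f ∘ h) ∧ s ⊆ Set.range h := by
  obtain ⟨b, hbG, hsb, hGb, hb⟩ := exists_linearIndepOn_id_extension hs hsG
  have hspan : Submodule.span K b = G := le_antisymm (Submodule.span_le.2 hbG) hGb
  let B : Module.Basis b K G :=
    (Module.Basis.span hb.linearIndependent).map (LinearEquiv.ofEq _ _ (by simpa using hspan))
  have : Finite b := Module.Finite.finite_basis B
  let e : Fin (Module.finrank K G) ≃ b :=
    (Finite.equivFinOfCardEq (Module.finrank_eq_nat_card_basis B).symm).symm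
  let σ := (Tuple.sort fun i => f (e i)).trans e
  have hrange : Set.range (fun i => (σ i : V)) = b :=
    (σ.surjective.range_comp Subtype.val).trans Subtype.range_coe
  exact ⟨fun i => σ i, hb.linearIndependent.comp _ σ.injective, by rw [hrange, hspan],
    Tuple.monotone_sort fun i => f (e i), by rwa [hrange]⟩

end LinearAlgebra

section Counting

variable {κ : Type*}

theorem card_filter_powerset_product (s t : Finset κ) (P : ℕ → ℕ → Prop) [DecidableRel P] :
    #{x ∈ s.powerset ×ˢ t.powerset | P #x.1 #x.2} =
      ∑ p ∈ range (#s + 1), ∑ q ∈ range (#t + 1),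
        if P p q then (#s).choose p * (#t).choose q else 0 := by
  have hinner (p : ℕ) : ∑ v ∈ t.powerset, (if P p #v then 1 else 0) =
      ∑ q ∈ range (#t + 1), if P p q then (#t).choose q else 0 := by
    simp [sum_powerset_apply_card fun q => if P p q then 1 else 0]
  simp only [card_filter, sum_product, hinner]
  rw [sum_powerset_apply_card fun p => ∑ q ∈ range (#t + 1), if P p q then (#t).choose q else 0]
  simp only [smul_eq_mul, mul_sum, mul_ite, mul_zero]

theorem injOn_union_powerset_product {s t : Finset κ} (hst : Disjoint s t) :
    Set.InjOn (fun x : Finset κ × Finset κ => x.1 ∪ x.2) (s.powerset ×ˢ t.powerset) := by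
  refine Set.LeftInvOn.injOn (f₁' := fun u => (u ∩ s, u ∩ t)) ?_
  rintro ⟨a, b⟩ hab
  obtain ⟨has, hbt⟩ : a ⊆ s ∧ b ⊆ t := by simpa using hab
  simp only [union_inter_distrib_right, inter_eq_left.2 has, inter_eq_left.2 hbt,
    disjoint_iff_inter_eq_empty.1 (hst.mono_left has),
    disjoint_iff_inter_eq_empty.1 (hst.symm.mono_left hbt), union_empty, empty_union]

variable [Fintype κ] {α : Type*} [LinearOrder α] [OrderBot α]

theorem card_filter_eq_sup_pos [Nonempty κ] (f : κ → α) : 0 < #{i | f i = univ.sup f} := by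
  obtain ⟨i, -, hi⟩ := exists_mem_eq_sup univ univ_nonempty f
  exact card_pos.2 ⟨i, by simp [hi]⟩

theorem card_filter_lt_sup (f : κ → α) :
    #{i | f i < univ.sup f} = Fintype.card κ - #{i | f i = univ.sup f} := by
  rw [← card_compl, compl_filter]
  simp only [(le_sup (mem_univ _)).lt_iff_ne]

end Counting

section Weight

theorem wt_zero : wt (0 : PauliT ι) = 0 := by simp [wt]

theorem wt_add_le (u v : PauliT ι) : wt (u + v) ≤ wt u + wt v := by
  have := hammingDist_triangle (-u) 0 v
  simpa [hammingDist_eq_hammingNorm, hammingNorm, wt] using this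

theorem wt_sum_le {κ : Type*} (s : Finset κ) (f : κ → PauliT ι) :
    wt (∑ i ∈ s, f i) ≤ ∑ i ∈ s, wt (f i) :=
  le_sum_of_subadditive wt wt_zero.le wt_add_le s f

theorem Aj_eq_card_filter (G : Submodule (ZMod 2) (PauliT ι)) (j : ℕ) :
    Aj G j = #{v | v ∈ G ∧ wt v = j} := by
  rw [Aj, Nat.card_eq_fintype_card, Fintype.card_subtype]

theorem sum_range_Aj (G : Submodule (ZMod 2) (PauliT ι)) (N : ℕ) :
    ∑ j ∈ range N, Aj G j = #{v | v ∈ G ∧ wt v < N} := by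
  rw [card_eq_sum_card_fiberwise (f := wt) (t := range N) (by intro v; simp)]
  refine sum_congr rfl fun j hj => ?_
  rw [Aj_eq_card_filter, filter_filter]
  congr! 2 with v
  grind

variable {G : Submodule (ZMod 2) (PauliT ι)}

theorem card_filter_wt_eq_le_Aj {κ : Type*} [Fintype κ] {g : κ → PauliT ι}
    (hg : Function.Injective g) (hgG : ∀ i, g i ∈ G) (j : ℕ) : #{i | wt (g i) = j} ≤ Aj G j := by
  rw [Aj_eq_card_filter]
  exact card_le_card_of_injOn g (fun i hi => by simpa [hgG] using hi) hg.injOn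

theorem sum_choose_mul_choose_le_sum_Aj {κ : Type*} {g : κ → PauliT ι}
    (hg : LinearIndependent (ZMod 2) g) (hgG : ∀ i, g i ∈ G) {s t : Finset κ}
    (hst : Disjoint s t) {a b : ℕ} (ha : ∀ i ∈ s, wt (g i) ≤ a) (hb : ∀ i ∈ t, wt (g i) ≤ b)
    (M : ℕ) :
    (∑ p ∈ range (#s + 1), ∑ q ∈ range (#t + 1),
        if p * a + q * b ≤ M then (#s).choose p * (#t).choose q else 0)
      ≤ ∑ m ∈ range (M + 1), Aj G m := by
  rw [sum_range_Aj, ← card_filter_powerset_product s t fun p q => p * a + q * b ≤ M]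
  refine card_le_card_of_injOn (fun x => ∑ i ∈ x.1 ∪ x.2, g i) ?_ ?_
  · rintro ⟨u, v⟩ huv
    obtain ⟨⟨hu, hv⟩, hM⟩ : (u ⊆ s ∧ v ⊆ t) ∧ #u * a + #v * b ≤ M := by simpa using huv
    have hwt : wt (∑ i ∈ u ∪ v, g i) ≤ M := calc
      wt (∑ i ∈ u ∪ v, g i) ≤ ∑ i ∈ u ∪ v, wt (g i) := wt_sum_le _ _
      _ = ∑ i ∈ u, wt (g i) + ∑ i ∈ v, wt (g i) := sum_union (hst.mono hu hv)
      _ ≤ #u * a + #v * b := Nat.add_le_add (sum_le_card_nsmul _ _ _ fun i hi => ha i (hu hi))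
        (sum_le_card_nsmul _ _ _ fun i hi => hb i (hv hi))
      _ ≤ M := hM
    simpa [Nat.lt_succ_iff, hwt] using G.sum_mem fun i _ => hgG i
  · exact (sum_injective_of_linearIndependent hg).comp_injOn
      ((injOn_union_powerset_product hst).mono fun x hx => by simp_all)

end Weight

section IsBasisFam

variable {κ : Type} {r : ℕ} {G : Submodule (ZMod 2) (PauliT κ)} {g : Fin r → PauliT κ}

theorem IsBasisFam.mem (hg : IsBasisFam G g) (i : Fin r) : g i ∈ G :=
  hg.2 ▸ Submodule.subset_span ⟨i, rfl⟩

theorem IsBasisFam.finrank_eq (hg : IsBasisFam G g) : Module.finrank (ZMod 2) G = r := by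
  rw [← hg.2, finrank_span_eq_card hg.1, Fintype.card_fin]

end IsBasisFam

section WeightOptimal

variable {r : ℕ} {G : Submodule (ZMod 2) (PauliT ι)} {g : Fin r → PauliT ι}

theorem IsWeightOptimalBasis.finrank_span_wt_lt_le (hg : IsWeightOptimalBasis G g) (w : ℕ) :
    Module.finrank (ZMod 2) (Submodule.span (ZMod 2) {v | v ∈ G ∧ wt v < w}) ≤
      #{i | wt (g i) < w} := by
  obtain ⟨b, hblight, hbspan, hbind⟩ := exists_linearIndependent (ZMod 2) {v | v ∈ G ∧ wt v < w}
  obtain ⟨h, hind, hspan, hmono, hbh⟩ :=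
    exists_monotone_linearIndependent_extension wt (G := G) hbind fun v hv => (hblight hv).1
  obtain rfl := hg.1.finrank_eq
  have hb : b ⊆ ({i | wt (g i) < w} : Finset _).image h := by
    intro v hv
    obtain ⟨i, rfl⟩ := hbh hv
    have hgi : wt (g i) < w := (hg.2.2 h ⟨hind, hspan⟩ hmono i).trans_lt (hblight hv).2
    exact mem_image_of_mem h (by simpa using hgi)
  calc Module.finrank (ZMod 2) (Submodule.span (ZMod 2) {v | v ∈ G ∧ wt v < w})
      = Module.finrank (ZMod 2) (Submodule.span (ZMod 2) b) := by rw [hbspan]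
    _ ≤ Module.finrank (ZMod 2) (Submodule.span (ZMod 2)
          (({i | wt (g i) < w} : Finset _).image h : Set (PauliT ι))) :=
        Submodule.finrank_mono (Submodule.span_mono hb)
    _ ≤ #(({i | wt (g i) < w} : Finset _).image h) := finrank_span_finset_le_card _
    _ ≤ #{i | wt (g i) < w} := card_image_le

theorem IsWeightOptimalBasis.sum_Aj_le_two_pow (hg : IsWeightOptimalBasis G g) (w : ℕ) :
    ∑ j ∈ range w, Aj G j ≤ 2 ^ #{i | wt (g i) < w} := by
  rw [sum_range_Aj]
  refine (card_le_card_pow_finrank_span (K := ZMod 2) _).trans ?_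
  rw [Nat.card_zmod, coe_filter_univ]
  exact Nat.pow_le_pow_right two_pos (hg.finrank_span_wt_lt_le w)

theorem weight_enumerator_constraints_general {w y : ℕ} (hr : 0 < r)
    (hg : IsWeightOptimalBasis G g) (hw : w = univ.sup fun i => wt (g i))
    (hy : y = #{i | wt (g i) = w}) :
    1 ≤ y ∧ y ≤ r ∧ y ≤ Aj G w ∧
    (∑ i ∈ range w, Aj G i) ≤ 2 ^ (r - y) ∧
    ∀ M : ℕ,
      (∑ p ∈ range (r - y + 1), ∑ q ∈ range (y + 1),
          if p * (w - 1) + q * w ≤ M then (r - y).choose p * y.choose q else 0)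
        ≤ ∑ m ∈ range (M + 1), Aj G m := by
  have : Nonempty (Fin r) := ⟨⟨0, hr⟩⟩
  have hlight : #{i | wt (g i) < w} = r - y := by
    rw [hy, hw, card_filter_lt_sup, Fintype.card_fin]
  refine ⟨?_, ?_, ?_, ?_, fun M => ?_⟩
  · exact hy ▸ hw ▸ card_filter_eq_sup_pos _
  · exact hy ▸ card_finset_fin_le _
  · exact hy ▸ card_filter_wt_eq_le_Aj hg.1.1.injective hg.1.mem w
  · exact hlight ▸ hg.sum_Aj_le_two_pow w
  · rw [← hlight, hy]
    refine sum_choose_mul_choose_le_sum_Aj hg.1.1 hg.1.mem ?_ ?_ ?_ M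
    · exact disjoint_filter.2 fun i _ hlt => hlt.ne
    · exact fun i hi => Nat.le_sub_one_of_lt (mem_filter.1 hi).2
    · exact fun i hi => (mem_filter.1 hi).2.le

end WeightOptimal

/-- constraints on the weight enumerators induced by a weight-optimal
generating set: with `w` the maximal generator weight and `y` the number of generators
of weight `w`, one has `1 ≤ y ≤ n-k`, `A_w ≥ y`, `Σ_{i<w} A_i ≤ 2^{n-k-y}`, and the
cumulative growth law for all `w - 1 ≤ M ≤ n`. -/
theorem weight_enumerator_constraints (n k w y : ℕ) (hpos : 0 < n - k)
    (G : Submodule (ZMod 2) (Pauli n)) (hG : IsStabilizer G)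
    (hdim : Module.finrank (ZMod 2) ↥G = n - k)
    (g : Fin (n - k) → Pauli n) (hopt : IsWeightOptimalBasis G g)
    (hw : w = Finset.univ.sup fun i => wt (g i))
    (hy : y = (Finset.univ.filter fun i => wt (g i) = w).card) :
    1 ≤ y ∧ y ≤ n - k ∧
    y ≤ Aj G w ∧
    (∑ i ∈ Finset.range w, Aj G i) ≤ 2 ^ (n - k - y) ∧
    (∀ M : ℕ, w - 1 ≤ M → M ≤ n →
      (∑ p ∈ Finset.range (n - k - y + 1), ∑ q ∈ Finset.range (y + 1),
          if p * (w - 1) + q * w ≤ M then (n - k - y).choose p * y.choose q else 0)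
        ≤ ∑ m ∈ Finset.range (M + 1), Aj G m) := by
  obtain ⟨hpos_y, hle_y, hA, hlight, hgrowth⟩ :=
    weight_enumerator_constraints_general hpos hopt hw hy
  exact ⟨hpos_y, hle_y, hA, hlight, fun M _ _ => hgrowth M⟩

end
end

section
/- Correctness of the reduction from maximum-likelihood decoding to the shortest-basis problem over 𝔽₂: let H : 𝔽₂^n →ₗ 𝔽₂^{m'} be an 𝔽₂-linear map, s ∈ 𝔽₂^{m'}, t ∈ ℕ, and suppose x ∈ 𝔽₂^n satisfies H x = s. Let 𝟙 := (1, …, 1) ∈ 𝔽₂^n and define the 𝔽₂-subspace V := {(u + c • x, c • 𝟙) : u ∈ ker H, c ∈ 𝔽₂} ⊆ 𝔽₂^n × 𝔽₂^n, where the weight of a pair (a, b) is the total Hamming weight wt(a) + wt(b). Then there exists e ∈ 𝔽₂^n with H e = s and wt(e) ≤ t if and only if V admits an 𝔽₂-basis all of whose elements have weight ≤ n + t. -/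
open scoped Classical

noncomputable section

variable {ι : Type} [Fintype ι]

/-- Hamming weight of an `𝔽₂` vector. -/
def hwt {m : ℕ} (v : Fin m → ZMod 2) : ℕ := (Finset.univ.filter fun i => v i ≠ 0).card

/-!
Every vector of `V` outside `ker H × 0` has an all-nonzero second half, of weight `n`, so the bound
`n + t` leaves at most `t` for its first half, which up to a scalar is a solution of `H e = s`.
Any spanning set contains such a vector. Conversely, a light solution `e` may replace `x` in the
definition of `V`, and vectors of `ker H × 0` satisfy the bound for free; the light vectors of `V`
thus span it, and a basis can be extracted from any spanning set. The argument works over every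
division ring, with `𝟙` replaced by any vector at least as heavy as all the first halves.
-/

section Spanning

variable {K E : Type*} [DivisionRing K] [AddCommGroup E] [Module K E]

theorem exists_fin_basis_forall_iff_le_span (V : Submodule K E) [FiniteDimensional K V]
    (P : E → Prop) :
    (∃ (r : ℕ) (b : Fin r → E), LinearIndependent K b ∧
        Submodule.span K (Set.range b) = V ∧ ∀ i, P (b i)) ↔
      V ≤ Submodule.span K {v | v ∈ V ∧ P v} := by
  constructor
  · rintro ⟨r, b, -, rfl, hP⟩
    refine Submodule.span_mono ?_
    rintro _ ⟨i, rfl⟩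
    exact ⟨Submodule.subset_span ⟨i, rfl⟩, hP i⟩
  · intro hV
    obtain ⟨B, hBP, hBspan, hB⟩ := exists_linearIndependent K {v | v ∈ V ∧ P v}
    have hspan : Submodule.span K B = V :=
      hBspan.trans (le_antisymm (Submodule.span_le.2 fun _ hv => hv.1) hV)
    have basis : Module.Basis B K V :=
      (Module.Basis.span hB).map (LinearEquiv.ofEq _ _ (by rw [Subtype.range_coe, hspan]))
    have : Finite B := Module.Finite.finite_basis basis
    let f := (Finite.equivFin B).symm
    refine ⟨Nat.card B, Subtype.val ∘ f, hB.comp f f.injective, ?_, fun i => (hBP (f i).2).2⟩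
    rw [f.surjective.range_comp, Subtype.range_coe, hspan]

end Spanning

section AugmentedKernel

variable {R E F M : Type*} [Ring R] [AddCommGroup E] [Module R E] [AddCommGroup F] [Module R F]
  [AddCommGroup M] [Module R M] {H : E →ₗ[R] M} {e x : E} {y : F} {v : E × F}

/-- The span of `ker H × 0` and `(x, y)`: the instance `V` of the shortest-basis problem, with the
vector `𝟙` generalized to a tag `y`. The second component of a vector records which multiple of the
coset representative `x` was added to its first. -/
def augmentedKer (H : E →ₗ[R] M) (x : E) (y : F) : Submodule R (E × F) :=
  (LinearMap.ker H).map (LinearMap.inl R E F) ⊔ Submodule.span R {(x, y)}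

theorem mem_augmentedKer :
    v ∈ augmentedKer H x y ↔
      ∃ (u : E) (c : R), u ∈ LinearMap.ker H ∧ v = (u + c • x, c • y) := by
  simp [augmentedKer, Submodule.mem_sup, Submodule.mem_span_singleton, eq_comm]

theorem mk_zero_mem_augmentedKer {u : E} (hu : u ∈ LinearMap.ker H) :
    (u, 0) ∈ augmentedKer H x y :=
  Submodule.mem_sup_left ⟨u, hu, rfl⟩

theorem mk_mem_augmentedKer (he : H e = H x) : (e, y) ∈ augmentedKer H x y :=
  mem_augmentedKer.2 ⟨e - x, 1, by simp [he], by simp⟩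

theorem augmentedKer_le_of_apply_eq (he : H e = H x) :
    augmentedKer H x y ≤ augmentedKer H e y :=
  sup_le le_sup_left <| (Submodule.span_singleton_le_iff_mem _ _).2 (mk_mem_augmentedKer he.symm)

theorem augmentedKer_le_span {P : E × F → Prop} (he : H e = H x)
    (hker : ∀ u ∈ LinearMap.ker H, P (u, 0)) (hP : P (e, y)) :
    augmentedKer H x y ≤ Submodule.span R {v | v ∈ augmentedKer H x y ∧ P v} := by
  refine (augmentedKer_le_of_apply_eq he).trans (sup_le ?_ ?_)
  · rintro _ ⟨u, hu, rfl⟩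
    exact Submodule.subset_span ⟨mk_zero_mem_augmentedKer hu, hker u hu⟩
  · rw [Submodule.span_singleton_le_iff_mem]
    exact Submodule.subset_span ⟨mk_mem_augmentedKer he, hP⟩

theorem exists_snd_ne_zero_of_augmentedKer_le_span {S : Set (E × F)} (hy : y ≠ 0)
    (hS : augmentedKer H x y ≤ Submodule.span R S) : ∃ v ∈ S, v.2 ≠ 0 := by
  by_contra! h
  have hsnd : Submodule.span R S ≤ LinearMap.ker (LinearMap.snd R E F) := Submodule.span_le.2 h
  exact hy (hsnd (hS (mk_mem_augmentedKer rfl)))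

end AugmentedKernel

section Reduction

variable {K M : Type*} [DivisionRing K] [AddCommGroup M] [Module K M]

theorem exists_eq_smul_of_mem_augmentedKer {E F : Type*} [AddCommGroup E] [Module K E]
    [AddCommGroup F] [Module K F] {H : E →ₗ[K] M} {x : E} {y : F} {v : E × F}
    (hv : v ∈ augmentedKer H x y) (hv₂ : v.2 ≠ 0) :
    ∃ (c : K) (e : E), c ≠ 0 ∧ H e = H x ∧ v = c • (e, y) := by
  obtain ⟨u, c, hu, rfl⟩ := mem_augmentedKer.1 hv
  have hc : c ≠ 0 := left_ne_zero_of_smul hv₂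
  refine ⟨c, c⁻¹ • u + x, hc, ?_, ?_⟩
  · rw [map_add, map_smul, LinearMap.mem_ker.1 hu, smul_zero, zero_add]
  · rw [Prod.smul_mk, smul_add, smul_inv_smul₀ hc]

variable {α β : Type*} [DecidableEq K] [Fintype α] [Fintype β]

theorem hammingNorm_smul_of_ne_zero {c : K} (hc : c ≠ 0) (v : α → K) :
    hammingNorm (c • v) = hammingNorm v :=
  hammingNorm_smul (fun _ => IsSMulRegular.of_ne_zero hc) v

theorem mld_to_sbp_reduction_general (H : (α → K) →ₗ[K] M) (x : α → K) (y : β → K)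
    (hy : Fintype.card α ≤ hammingNorm y) (t : ℕ) :
    (∃ e : α → K, H e = H x ∧ hammingNorm e ≤ t) ↔
      ∃ (r : ℕ) (b : Fin r → (α → K) × (β → K)), LinearIndependent K b ∧
        Submodule.span K (Set.range b) = augmentedKer H x y ∧
        ∀ i, hammingNorm (b i).1 + hammingNorm (b i).2 ≤ hammingNorm y + t := by
  rw [exists_fin_basis_forall_iff_le_span (augmentedKer H x y)
    fun v => hammingNorm v.1 + hammingNorm v.2 ≤ hammingNorm y + t]
  have weight_le (u : α → K) : hammingNorm u ≤ hammingNorm y :=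
    hammingNorm_le_card_fintype.trans hy
  constructor
  · rintro ⟨e, he, het⟩
    refine augmentedKer_le_span he (fun u _ => ?_) (by dsimp only; lia)
    rw [hammingNorm_zero, add_zero]
    exact le_add_right (weight_le u)
  · intro hspan
    rcases eq_or_ne y 0 with rfl | hy₀
    · -- The index type `α` is empty here, so `x` itself has weight `0`.
      exact ⟨x, rfl, by simpa using (weight_le x).trans (Nat.le_add_right _ t)⟩
    obtain ⟨v, ⟨hv, hvt⟩, hv₂⟩ := exists_snd_ne_zero_of_augmentedKer_le_span hy₀ hspan
    obtain ⟨c, e, hc, he, rfl⟩ := exists_eq_smul_of_mem_augmentedKer hv hv₂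
    rw [Prod.smul_fst, Prod.smul_snd, hammingNorm_smul_of_ne_zero hc,
      hammingNorm_smul_of_ne_zero hc] at hvt
    exact ⟨e, he, by lia⟩

end Reduction

theorem hwt_eq_hammingNorm {m : ℕ} (v : Fin m → ZMod 2) : hwt v = hammingNorm v := rfl

theorem hammingNorm_const_one {α K : Type*} [Fintype α] [MulZeroOneClass K] [Nontrivial K]
    [DecidableEq K] : hammingNorm (fun _ : α => (1 : K)) = Fintype.card α := by
  simp [hammingNorm]

/-- correctness of the reduction `MLD ≤p SBP` over `𝔽₂`. -/
theorem mld_to_sbp_reduction (n m' : ℕ)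
    (H : (Fin n → ZMod 2) →ₗ[ZMod 2] (Fin m' → ZMod 2))
    (s : Fin m' → ZMod 2) (t : ℕ) (x : Fin n → ZMod 2) (hx : H x = s)
    (V : Submodule (ZMod 2) ((Fin n → ZMod 2) × (Fin n → ZMod 2)))
    (hV : ∀ v, v ∈ V ↔ ∃ (u : Fin n → ZMod 2) (c : ZMod 2),
        u ∈ LinearMap.ker H ∧ v = (u + c • x, c • fun _ => (1 : ZMod 2))) :
    (∃ e : Fin n → ZMod 2, H e = s ∧ hwt e ≤ t) ↔
    (∃ (r : ℕ) (b : Fin r → (Fin n → ZMod 2) × (Fin n → ZMod 2)),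
        LinearIndependent (ZMod 2) b ∧
        Submodule.span (ZMod 2) (Set.range b) = V ∧
        ∀ i, hwt (b i).1 + hwt (b i).2 ≤ n + t) := by
  obtain rfl : V = augmentedKer H x fun _ : Fin n => (1 : ZMod 2) :=
    Submodule.ext fun v => (hV v).trans mem_augmentedKer.symm
  subst hx
  simpa only [hwt_eq_hammingNorm, hammingNorm_const_one, Fintype.card_fin] using
    mld_to_sbp_reduction_general H x _ hammingNorm_const_one.ge t

end
end
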